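/- Fix n : ℕ. Let a, b, c, c' : Fin (n+1) → ℝ and v, w, m : ℝ. Assume: (1) ∀ j k, c j ≤ c k → a j ≤ a k; (2) ∀ j k, c' j ≤ c' k → b j ≤ b k; (3) ∀ j k, c j ≤ v → c' k ≤ w → a j + b k ≤ m; (4) ∀ j k, v ≤ c j → w ≤ c' k → m ≤ a j + b k. Then there exist x, y : ℝ with x + y = m, (∀ j, c j ≤ v → a j ≤ x), (∀ j, v ≤ c j → x ≤ a j), (∀ k, c' k ≤ w → b k ≤ y), and (∀ k, w ≤ c' k → y ≤ b k). -/

import Mathlib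

/-!
Substituting `y = m - x`, the four families of constraints become lower and upper bounds on the
single real number `x`. The lower bounds are the `a j` with `c j ≤ v` and the `m - b k` with
`w ≤ c' k`; the upper bounds are the `a j` with `v ≤ c j` and the `m - b k` with `c' k ≤ w`.
The four hypotheses say exactly what is needed for every lower bound to be at most every upper
bound, and since both families are finite, a separating `x` exists
(`exists_separating_of_finite`).
-/

/-- Finiteness provides the separating point when one of the two sets is empty. -/
lemma exists_separating_of_finite {L U : Set ℝ} (hL : L.Finite) (hU : U.Finite)
    (h : ∀ l ∈ L, ∀ u ∈ U, l ≤ u) : ∃ x, (∀ l ∈ L, l ≤ x) ∧ ∀ u ∈ U, x ≤ u := by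
  rcases L.eq_empty_or_nonempty with rfl | hne
  · obtain ⟨x, hx⟩ := hU.bddBelow
    exact ⟨x, by simp, fun u hu => hx hu⟩
  · exact ⟨sSup L, fun l hl => le_csSup hL.bddAbove hl,
      fun u hu => csSup_le hne fun l hl => h l hl u hu⟩

/-- A point `(x, y)` on the antidiagonal `x + y = m` can always be inserted with `x` at
horizontal level `v` and `y` at vertical level `w`, provided the configuration satisfies the
comparisons derivable by transitivity. -/
theorem exists_antidiagonal_lift (n : ℕ) (a b c c' : Fin (n + 1) → ℝ) (v w m : ℝ)
    (h1 : ∀ j k, c j ≤ c k → a j ≤ a k)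
    (h2 : ∀ j k, c' j ≤ c' k → b j ≤ b k)
    (h3 : ∀ j k, c j ≤ v → c' k ≤ w → a j + b k ≤ m)
    (h4 : ∀ j k, v ≤ c j → w ≤ c' k → m ≤ a j + b k) :
    ∃ x y : ℝ, x + y = m ∧
      (∀ j, c j ≤ v → a j ≤ x) ∧ (∀ j, v ≤ c j → x ≤ a j) ∧
      (∀ k, c' k ≤ w → b k ≤ y) ∧ (∀ k, w ≤ c' k → y ≤ b k) := by
  obtain ⟨x, hl, hu⟩ := exists_separating_of_finite
    (L := a '' {j | c j ≤ v} ∪ (fun k => m - b k) '' {k | w ≤ c' k})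
    (U := a '' {j | v ≤ c j} ∪ (fun k => m - b k) '' {k | c' k ≤ w})
    (((Set.toFinite _).image _).union ((Set.toFinite _).image _))
    (((Set.toFinite _).image _).union ((Set.toFinite _).image _)) (by
      rintro _ (⟨j, hj, rfl⟩ | ⟨j, hj, rfl⟩) _ (⟨k, hk, rfl⟩ | ⟨k, hk, rfl⟩)
      · exact h1 j k (le_trans hj hk)
      · linarith [h3 j k hj hk]
      · linarith [h4 k j hk hj]
      · linarith [h2 k j (le_trans hk hj)])
  refine ⟨x, m - x, by ring, fun j hj => hl _ (.inl ⟨j, hj, rfl⟩),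
    fun j hj => hu _ (.inl ⟨j, hj, rfl⟩), fun k hk => ?_, fun k hk => ?_⟩
  · linarith [hu _ (.inr ⟨k, hk, rfl⟩)]
  · linarith [hl _ (.inr ⟨k, hk, rfl⟩)]
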